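/- arXiv:0909.5232 — 2 statements merged into one kernel-verified Lean document; each statement's English description precedes it below -/
import Mathlib

section
/- Let κ be an algebraically closed field of characteristic zero, and let f : X → Y be a proper morphism of integral schemes of finite type over κ which is bijective on the underlying sets of points. Then f is birational: there exists a nonempty open subscheme U ⊆ Y such that the restriction of f to f⁻¹(U) → U is an isomorphism of schemes. -/
open AlgebraicGeometry CategoryTheory

lemma ringLemma (κ A B : Type) [Field κ] [IsAlgClosed κ] [CharZero κ] [CommRing A] [CommRing B]
    [IsDomain A] [IsDomain B] [Algebra κ A] [Algebra A B] [Algebra.FiniteType κ A]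
    [Module.Finite A B] (hinj : Function.Injective (algebraMap A B))
    (hspec : Function.Injective (PrimeSpectrum.comap (algebraMap A B))) :
    ∃ a : A, a ≠ 0 ∧ ∀ b : B, ∃ c : A, a • b = algebraMap A B c := by
  let : Algebra κ B := ((algebraMap A B).comp (algebraMap κ A)).toAlgebra
  have : IsScalarTower κ A B := IsScalarTower.of_algebraMap_eq fun _ => rfl
  have : Algebra.FiniteType κ B := Algebra.FiniteType.trans (S := A) inferInstance inferInstance
  have : IsJacobsonRing B := isJacobsonRing_of_finiteType (A := κ)
  have : FaithfulSMul A B := (faithfulSMul_iff_algebraMap_injective A B).mpr hinj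
  -- unramified at the generic point
  have h1 : Algebra.IsUnramifiedAt A (⊥ : Ideal B) := by
    let K := FractionRing A
    let L := FractionRing B
    have : CharZero A := charZero_of_injective_algebraMap (algebraMap κ A).injective
    have : CharZero K := charZero_of_injective_algebraMap (IsFractionRing.injective A K)
    have : FaithfulSMul A L := FaithfulSMul.trans A B L
    let : Algebra K L := FractionRing.liftAlgebra A L
    have : Algebra.IsAlgebraic B L := IsFractionRing.comap_isAlgebraic_iff (K := L).mpr inferInstance
    have : Algebra.IsAlgebraic A L := Algebra.IsAlgebraic.trans A B L
    have : Algebra.IsAlgebraic K L := IsFractionRing.comap_isAlgebraic_iff.mp ‹_›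
    have : Algebra.IsSeparable K L := inferInstance
    have : Algebra.EssFiniteType A L := Algebra.EssFiniteType.comp A B L
    have : Algebra.EssFiniteType K L := Algebra.EssFiniteType.of_comp A K L
    have : Algebra.FormallyUnramified K L := .of_isSeparable K L
    have : Algebra.FormallyUnramified A K := .of_isLocalization (nonZeroDivisors A)
    have : Algebra.FormallyUnramified A L := .comp A K L
    have : IsLocalization (nonZeroDivisors B) (Localization.AtPrime (⊥ : Ideal B)) := by
      have : (⊥ : Ideal B).primeCompl = nonZeroDivisors B := by
        ext x; simp [Ideal.primeCompl]
      rw [← this]; infer_instance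
    exact .of_equiv ((IsLocalization.algEquiv (nonZeroDivisors B) L
      (Localization.AtPrime (⊥ : Ideal B))).restrictScalars A)
  obtain ⟨f, hf, hunr⟩ := Algebra.exists_formallyUnramified_of_isUnramifiedAt (R := A) (⊥ : Ideal B)
  have hf0 : f ≠ 0 := by simpa using hf
  obtain ⟨q, hq, hfq⟩ : ∃ q : Ideal B, q.IsMaximal ∧ f ∉ q := by
    have hb : (⊥ : Ideal B).jacobson = ⊥ := IsJacobsonRing.out inferInstance Ideal.isRadical_bot
    by_contra! h
    apply hf0
    have : f ∈ (⊥ : Ideal B).jacobson := Ideal.mem_sInf.mpr fun {I} hI => h I hI.2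
    rwa [hb] at this
  let m := q.comap (algebraMap A B)
  have hm : m.IsMaximal := Ideal.isMaximal_comap_of_isIntegral_of_isMaximal q
  have huniq : ∀ P : Ideal B, P.IsPrime → m.map (algebraMap A B) ≤ P → P = q := by
    intro P hP hle
    have h2 : m = P.comap (algebraMap A B) :=
      hm.eq_of_le (Ideal.comap_ne_top _ hP.ne_top) (Ideal.map_le_iff_le_comap.mp hle)
    have := @hspec ⟨P, hP⟩ ⟨q, hq.isPrime⟩ (PrimeSpectrum.ext h2.symm)
    exact congrArg PrimeSpectrum.asIdeal this
  have hqm : q ≤ m.map (algebraMap A B) := by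
    intro x hx
    have hr : x ∈ (m.map (algebraMap A B)).radical := by
      rw [Ideal.radical_eq_sInf]
      exact Ideal.mem_sInf.mpr fun {P} hP => (huniq P hP.2 hP.1) ▸ hx
    obtain ⟨n, hn⟩ := hr
    let Bf := Localization.Away f
    have : Algebra.EssFiniteType A Bf := Algebra.EssFiniteType.comp A B Bf
    have hrad := Algebra.FormallyUnramified.isRadical_map_isMaximal (A := A) Bf m
    have hmm : m.map (algebraMap A Bf) = (m.map (algebraMap A B)).map (algebraMap B Bf) := by
      rw [Ideal.map_map, ← IsScalarTower.algebraMap_eq]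
    have hx2 : algebraMap B Bf x ∈ m.map (algebraMap A Bf) := by
      apply hrad
      refine ⟨n, ?_⟩
      rw [hmm, ← map_pow]
      exact Ideal.mem_map_of_mem _ hn
    rw [hmm, IsLocalization.algebraMap_mem_map_algebraMap_iff (Submonoid.powers f)] at hx2
    obtain ⟨_, ⟨k, rfl⟩, hk⟩ := hx2
    have htop : Ideal.span {f ^ k} ⊔ m.map (algebraMap A B) = ⊤ := by
      by_contra hne
      obtain ⟨M, hM, hle⟩ := Ideal.exists_le_maximal _ hne
      have := huniq M hM.isPrime (le_sup_right.trans hle)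
      subst this
      exact hfq (hM.isPrime.mem_of_pow_mem k (hle (Ideal.mem_sup_left (Ideal.mem_span_singleton_self _))))
    obtain ⟨u, hu, v, hv, huv⟩ := Submodule.mem_sup.mp (htop ▸ Submodule.mem_top : (1 : B) ∈ _)
    obtain ⟨c, rfl⟩ := Ideal.mem_span_singleton'.mp hu
    have : x = c * (f ^ k * x) + x * v := by linear_combination (-x) * huv
    rw [this]
    exact Ideal.add_mem _ (Ideal.mul_mem_left _ _ hk) (Ideal.mul_mem_left _ _ hv)
  -- residue field
  let : Field (B ⧸ q) := Ideal.Quotient.field q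
  have : Algebra.FiniteType κ (B ⧸ q) := inferInstance
  have : Module.Finite κ (B ⧸ q) := finite_of_finite_type_of_isJacobsonRing κ (B ⧸ q)
  have hsurj : Function.Surjective (algebraMap κ (B ⧸ q)) :=
    (IsAlgClosed.algebraMap_bijective_of_isIntegral (k := κ) (K := B ⧸ q)).2
  let N : Submodule A B := LinearMap.range (Algebra.linearMap A B)
  have hN : (⊤ : Submodule A (B ⧸ N)) ≤ m • ⊤ := by
    rintro y -
    obtain ⟨b, rfl⟩ := N.mkQ_surjective y
    obtain ⟨t, ht⟩ := hsurj (Ideal.Quotient.mk q b)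
    have h3 : b - algebraMap A B (algebraMap κ A t) ∈ q := by
      rw [← Ideal.Quotient.eq]; exact ht.symm
    have h4 := hqm h3
    have h5 : b - algebraMap A B (algebraMap κ A t) ∈ m • (⊤ : Submodule A B) := by
      rw [Ideal.smul_top_eq_map]; exact h4
    have h6 : N.mkQ b = N.mkQ (b - algebraMap A B (algebraMap κ A t)) := by
      rw [map_sub, eq_comm, sub_eq_self]
      exact (Submodule.Quotient.mk_eq_zero N).mpr ⟨_, rfl⟩
    rw [h6]
    have h7 := Submodule.mem_map_of_mem (f := N.mkQ) h5
    rw [Submodule.map_smul''] at h7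
    exact Submodule.smul_mono le_rfl le_top h7
  obtain ⟨r, hr1, hr⟩ := Submodule.exists_sub_one_mem_and_smul_eq_zero_of_fg_of_le_smul m
    (⊤ : Submodule A (B ⧸ N)) Module.Finite.fg_top hN
  refine ⟨r, ?_, fun b => ?_⟩
  · rintro rfl
    apply hm.ne_top
    rw [Ideal.eq_top_iff_one]
    simpa using hr1
  · have := hr (N.mkQ b) trivial
    rw [← map_smul] at this
    obtain ⟨c, hc⟩ := (Submodule.Quotient.mk_eq_zero N).mp this
    exact ⟨c, hc.symm⟩

theorem proper_bijective_birational
    (κ : Type) [Field κ] [IsAlgClosed κ] [CharZero κ]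
    {X Y : Scheme} (f : X ⟶ Y)
    (sX : X ⟶ Spec (CommRingCat.of κ)) (sY : Y ⟶ Spec (CommRingCat.of κ))
    (hcomp : sX = f ≫ sY)
    [IsIntegral X] [IsIntegral Y]
    [LocallyOfFiniteType sX] [QuasiCompact sX]
    [LocallyOfFiniteType sY] [QuasiCompact sY]
    [IsProper f] (hbij : Function.Bijective f.base) :
    ∃ U : Y.Opens, U ≠ ⊥ ∧ IsIso (f ∣_ U) := by
  have hqf : LocallyQuasiFinite f := .of_injective hbij.1
  have hfin : IsFinite f := .of_isProper_of_locallyQuasiFinite f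
  have hsur : Surjective f := ⟨hbij.2⟩
  have hdom : IsSchemeTheoreticallyDominant f := .of_isDominant f
  obtain ⟨y⟩ : Nonempty Y := inferInstance
  obtain ⟨_, ⟨V, hV, rfl⟩, hyV, -⟩ := Y.isBasis_affineOpens.exists_subset_of_mem_open
    (Set.mem_univ y) isOpen_univ
  have hneV : Nonempty V := ⟨⟨y, hyV⟩⟩
  obtain ⟨x, hx⟩ := hbij.2 y
  have hW : IsAffineOpen (f ⁻¹ᵁ V) := hV.preimage f
  have hneW : Nonempty (f ⁻¹ᵁ V) := ⟨⟨x, by change f x ∈ V; exact hx ▸ hyV⟩⟩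
  let φ : CommRingCat.of κ ⟶ Γ(Y, V) :=
    (Scheme.ΓSpecIso (.of κ)).inv ≫ sY.appLE ⊤ V le_top
  have hφ : φ.hom.FiniteType := by
    have h1 := sY.finiteType_appLE (isAffineOpen_top _) hV le_top
    have h2 : (Scheme.ΓSpecIso (.of κ)).inv.hom.FiniteType :=
      RingHom.FiniteType.of_surjective _ (ConcreteCategory.bijective_of_isIso _).2
    exact h1.comp h2
  have hspec : Function.Injective (PrimeSpectrum.comap (f.app V).hom) := by
    have h := hV.SpecMap_appLE_fromSpec f hW le_rfl
    rw [← Scheme.Hom.app_eq_appLE] at h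
    have h1 : Function.Injective (hW.fromSpec ≫ f) := by
      rw [Scheme.Hom.comp_base, TopCat.coe_comp]
      exact hbij.1.comp hW.fromSpec.isOpenEmbedding.injective
    rw [← h, Scheme.Hom.comp_base, TopCat.coe_comp] at h1
    exact h1.of_comp
  let : Algebra κ Γ(Y, V) := φ.hom.toAlgebra
  let : Algebra Γ(Y, V) Γ(X, f ⁻¹ᵁ V) := (f.app V).hom.toAlgebra
  have : Algebra.FiniteType κ Γ(Y, V) := hφ
  have : Module.Finite Γ(Y, V) Γ(X, f ⁻¹ᵁ V) := IsFinite.finite_app f V hV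
  obtain ⟨a, ha, hab⟩ := ringLemma κ Γ(Y, V) Γ(X, f ⁻¹ᵁ V) (f.app_injective V) hspec
  have hU : IsAffineOpen (Y.basicOpen a) := hV.basicOpen a
  refine ⟨Y.basicOpen a, ?_, ?_⟩
  · rw [Ne, basicOpen_eq_bot_iff]
    exact ha
  have hUV : Y.basicOpen a ≤ V := Y.basicOpen_le a
  have hbijU : Function.Bijective (f.app (Y.basicOpen a)) := by
    refine ⟨f.app_injective _, fun s => ?_⟩
    let i : f ⁻¹ᵁ (Y.basicOpen a) ⟶ f ⁻¹ᵁ V := homOfLE (fun _ h => hUV h)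
    have e : f ⁻¹ᵁ (Y.basicOpen a) = X.basicOpen (f.app V a) := Scheme.preimage_basicOpen f a
    let := (X.presheaf.map i.op).hom.toAlgebra
    have hloc : IsLocalization.Away (f.app V a) Γ(X, f ⁻¹ᵁ (Y.basicOpen a)) :=
      hW.isLocalization_of_eq_basicOpen _ i e
    have hnat : ∀ z, X.presheaf.map i.op (f.app V z) =
        f.app (Y.basicOpen a) (Y.presheaf.map (homOfLE hUV).op z) := fun z => by
      rw [← ConcreteCategory.comp_apply, ← ConcreteCategory.comp_apply, f.naturality]; rfl
    obtain ⟨n, b, hb⟩ := IsLocalization.Away.surj (f.app V a) s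
    obtain ⟨c, hc⟩ := hab b
    have hc' : f.app V a * b = f.app V c := by rw [Algebra.smul_def] at hc; exact hc
    have hu : IsUnit (Y.presheaf.map (homOfLE hUV).op a) := RingedSpace.isUnit_res_basicOpen _ a
    obtain ⟨u, hu⟩ := hu
    have hb' : s * (f.app (Y.basicOpen a) u) ^ n = X.presheaf.map i.op b := by
      rw [hu, ← hnat]; exact hb
    have hc2 := congrArg (X.presheaf.map i.op) hc'
    rw [map_mul, hnat, hnat, ← hu, ← hb'] at hc2
    refine ⟨(Y.presheaf.map (homOfLE hUV).op c) * (↑u⁻¹) ^ (n + 1), ?_⟩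
    have h1 : f.app (Y.basicOpen a) (u : Γ(Y, Y.basicOpen a)) *
        f.app (Y.basicOpen a) ((u⁻¹ : Γ(Y, Y.basicOpen a)ˣ) : Γ(Y, Y.basicOpen a)) = 1 := by
      rw [← map_mul]; simp
    rw [map_mul, ← hc2, map_pow]
    generalize (f.app (Y.basicOpen a)) (u : Γ(Y, Y.basicOpen a)) = p at *
    generalize (f.app (Y.basicOpen a)) ((u⁻¹ : Γ(Y, Y.basicOpen a)ˣ) : Γ(Y, Y.basicOpen a)) = q at *
    calc _ = s * (p * q) ^ (n + 1) := by ring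
      _ = s := by rw [h1]; simp
  have hisoU : IsIso (f.app (Y.basicOpen a)) := (ConcreteCategory.isIso_iff_bijective _).mpr hbijU
  have hA : IsAffine (Y.basicOpen a) := hU
  have hB : IsAffine (f ⁻¹ᵁ Y.basicOpen a) := hU.preimage f
  have happ : IsIso (f ∣_ Y.basicOpen a).appTop := by
    rw [morphismRestrict_appTop]
    have : IsIso (f.app ((Y.basicOpen a).ι ''ᵁ ⊤)) := by
      rw [Scheme.Opens.ι_image_top]; exact hisoU
    have h2 : IsIso (X.presheaf.map (eqToHom (image_morphismRestrict_preimage f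
      (Y.basicOpen a) ⊤)).op) := Functor.map_isIso _ _
    exact IsIso.comp_isIso' this h2
  have hn := Scheme.toSpecΓ_naturality (f ∣_ Y.basicOpen a)
  have hi : IsIso ((f ∣_ Y.basicOpen a) ≫ (Y.basicOpen a : Scheme).toSpecΓ) := by
    rw [hn]; infer_instance
  exact IsIso.of_isIso_comp_right _ (Y.basicOpen a : Scheme).toSpecΓ
end

section
/- Let κ be an algebraically closed field and let a₁, …, a_r be r pairwise distinct elements of κ, and set Z = κ ∖ {a₁, …, a_r}. The map sending a multiset m = {c₁, …, c_r} of r elements of Z to the tuple (f_m(a₁), …, f_m(a_r)), where f_m(x) = ∏_{i=1}^{r}(x − c_i), is a bijection from the set of multisets of size r of elements of Z onto (κ ∖ {0})^r. -/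
open Polynomial in
theorem eval_prod_aux {κ : Type*} [Field κ] (m : Multiset κ) (x : κ) :
    ((m.map fun c => X - C c).prod).eval x = (m.map fun c => x - c).prod := by
  simp [eval_multiset_prod, Multiset.map_map]

/-- Let `κ` be algebraically closed, `a 0, …, a (r-1)` pairwise distinct
elements of `κ`, and `Z = κ ∖ {a 0, …, a (r-1)}`.  The map sending a multiset
`m = {c₁, …, c_r}` of `r` elements of `Z` to the tuple
`(f_m (a 0), …, f_m (a (r-1)))`, where `f_m(x) = ∏ᵢ (x - cᵢ)`, is a bijection
from the multisets of size `r` of elements of `Z` onto `(κ ∖ {0})^r`. -/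
theorem sym_punctured_line_bijOn_torus
    (κ : Type*) [Field κ] [IsAlgClosed κ] (r : ℕ)
    (a : Fin r → κ) (ha : Function.Injective a) :
    Set.BijOn (fun m : Multiset κ => fun i : Fin r => (m.map fun c => a i - c).prod)
      {m : Multiset κ | Multiset.card m = r ∧ ∀ c ∈ m, ∀ i : Fin r, c ≠ a i}
      {v : Fin r → κ | ∀ i, v i ≠ 0} := by
  have hinj : Set.InjOn a (Finset.univ : Finset (Fin r)) := ha.injOn
  refine ⟨?_, ?_, ?_⟩
  · rintro m ⟨-, hm⟩ i h0
    obtain ⟨c, hc, h⟩ := Multiset.mem_map.1 (Multiset.prod_eq_zero_iff.1 h0)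
    exact hm c hc i (sub_eq_zero.1 h).symm
  · rintro m ⟨hm, -⟩ n ⟨hn, -⟩ h
    have hd : ∀ s : Multiset κ, Multiset.card s = r →
        ((s.map fun c => Polynomial.X - Polynomial.C c).prod).degree = (r : WithBot ℕ) := by
      intro s hs
      rw [Polynomial.degree_eq_natDegree (Polynomial.monic_multisetProd_X_sub_C s).ne_zero,
        Polynomial.natDegree_multiset_prod_X_sub_C_eq_card, hs]
    have key : (m.map fun c => Polynomial.X - Polynomial.C c).prod
        = (n.map fun c => Polynomial.X - Polynomial.C c).prod := by
      apply Polynomial.eq_of_degree_le_of_eval_index_eq Finset.univ hinj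
      · simp [hd m hm]
      · rw [hd m hm, hd n hn]
      · rw [(Polynomial.monic_multisetProd_X_sub_C m).leadingCoeff,
          (Polynomial.monic_multisetProd_X_sub_C n).leadingCoeff]
      · intro i _
        rw [eval_prod_aux, eval_prod_aux]
        exact congrFun h i
    rw [← Polynomial.roots_multiset_prod_X_sub_C m, key, Polynomial.roots_multiset_prod_X_sub_C]
  · intro v hv
    set f := Lagrange.nodal Finset.univ a + Lagrange.interpolate Finset.univ a v with hf
    have hlt : (Lagrange.interpolate Finset.univ a v).degree
        < (Lagrange.nodal Finset.univ a).degree := by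
      rw [Lagrange.degree_nodal]
      exact Lagrange.degree_interpolate_lt v hinj
    have hmon : f.Monic := (Lagrange.nodal_monic).add_of_left hlt
    have hnd : f.natDegree = r := by
      apply Polynomial.natDegree_eq_of_degree_eq_some
      rw [hf, Polynomial.degree_add_eq_left_of_degree_lt hlt, Lagrange.degree_nodal]
      simp
    have hev : ∀ i, f.eval (a i) = v i := by
      intro i
      rw [hf, Polynomial.eval_add, Lagrange.eval_nodal_at_node (Finset.mem_univ i),
        Lagrange.eval_interpolate_at_node v hinj (Finset.mem_univ i), zero_add]
    have hcard : Multiset.card f.roots = f.natDegree := IsAlgClosed.card_roots_eq_natDegree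
    refine ⟨f.roots, ⟨hcard.trans hnd, ?_⟩, ?_⟩
    · rintro c hc i rfl
      exact hv i ((hev i).symm.trans (Polynomial.isRoot_of_mem_roots hc))
    · funext i
      change (f.roots.map fun c => a i - c).prod = v i
      rw [← eval_prod_aux, Polynomial.prod_multiset_X_sub_C_of_monic_of_roots_card_eq hmon hcard,
        hev]
end
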